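/- arXiv:1612.01654 — 3 statements merged into one kernel-verified Lean document; each statement's English description precedes it below -/
import Mathlib

section
/- Let ℓ : π → ∧²H be a half-intersection cocycle for φ. Then for every element d of the commutator subgroup [π,π], the value ℓ(d) lies in the additive subgroup (ℤ-submodule) of ∧²H generated by the set {φ(g)∧φ(h) : g, h ∈ π}. -/
/-!
Since `⁅g, h⁆ * (h * g) = g * h` and `φ ⁅g, h⁆ = 0`, the cocycle identity gives
`ℓ ⁅g, h⁆ = ℓ (g * h) - ℓ (h * g) = (1/2) • (φ g ∧ φ h - φ h ∧ φ g) = φ g ∧ φ h`.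
On the kernel of `φ` the correction term vanishes, so `ℓ` is additive there; as the commutator
subgroup is generated by commutators and lies in that kernel, `ℓ` maps it into the subgroup
generated by the `φ g ∧ φ h`.
-/

open scoped TensorProduct

/-- The wedge `x ∧ y` as an element of the exterior square `⋀[ℚ]^2 H`. -/
noncomputable def wedge {H : Type*} [AddCommGroup H] [Module ℚ H] (x y : H) : ⋀[ℚ]^2 H :=
  ⟨ExteriorAlgebra.ι ℚ x * ExteriorAlgebra.ι ℚ y, by
    rw [ExteriorAlgebra.exteriorPower, pow_two]
    exact Submodule.mul_mem_mul (LinearMap.mem_range_self _ x) (LinearMap.mem_range_self _ y)⟩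

/-- `ℓ : π → ⋀²H` is a half-intersection cocycle for `φ` if `ℓ(1) = 0` and
`ℓ(gh) = ℓ(g) + ℓ(h) + (1/2)·φ(g)∧φ(h)`. -/
def IsHalfCocycle {π H : Type*} [Group π] [AddCommGroup H] [Module ℚ H]
    (φ : π → H) (ℓ : π → ⋀[ℚ]^2 H) : Prop :=
  ℓ 1 = 0 ∧ ∀ g h : π, ℓ (g * h) = ℓ g + ℓ h + (1/2 : ℚ) • wedge (φ g) (φ h)

open scoped commutatorElement

theorem wedge_zero_left {H : Type*} [AddCommGroup H] [Module ℚ H] (y : H) :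
    wedge 0 y = 0 :=
  Subtype.ext (by simp [wedge])

theorem wedge_swap {H : Type*} [AddCommGroup H] [Module ℚ H] (x y : H) :
    wedge y x = -wedge x y :=
  Subtype.ext (eq_neg_of_add_eq_zero_left (ExteriorAlgebra.ι_add_mul_swap y x))

theorem map_commutatorElement_eq_zero {π H : Type*} [Group π] [AddCommGroup H]
    (φ : π → H) (hφ : ∀ g h : π, φ (g * h) = φ g + φ h) (g h : π) : φ ⁅g, h⁆ = 0 := by
  have e := hφ ⁅g, h⁆ (h * g)
  rw [show ⁅g, h⁆ * (h * g) = g * h by simp [commutatorElement_def, mul_assoc], hφ, hφ,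
    add_comm (φ h)] at e
  exact left_eq_add.mp (by rw [add_comm]; exact e)

theorem ell_commutatorElement {π H : Type*} [Group π] [AddCommGroup H] [Module ℚ H]
    (φ : π → H) (hφ : ∀ g h : π, φ (g * h) = φ g + φ h)
    (ℓ : π → ⋀[ℚ]^2 H) (hℓ : IsHalfCocycle φ ℓ) (g h : π) :
    ℓ ⁅g, h⁆ = wedge (φ g) (φ h) := by
  have e := hℓ.2 ⁅g, h⁆ (h * g)
  rw [show ⁅g, h⁆ * (h * g) = g * h by simp [commutatorElement_def, mul_assoc],
    map_commutatorElement_eq_zero φ hφ, wedge_zero_left, hℓ.2 g h, hℓ.2 h g,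
    wedge_swap (φ g) (φ h)] at e
  linear_combination (norm := module) -e

theorem ell_commutatorSubgroup_mem {π H : Type*} [Group π] [AddCommGroup H] [Module ℚ H]
    (φ : π → H) (hφ : ∀ g h : π, φ (g * h) = φ g + φ h)
    (ℓ : π → ⋀[ℚ]^2 H) (hℓ : IsHalfCocycle φ ℓ)
    (d : π) (hd : d ∈ commutator π) :
    ℓ d ∈ AddSubgroup.closure {u : ⋀[ℚ]^2 H | ∃ g h : π, u = wedge (φ g) (φ h)} := by
  have h1 : φ 1 = 0 := by simpa using hφ 1 1
  -- Vanishing of `φ` is carried along the induction, since it is what makes `ℓ` additive.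
  suffices key : φ d = 0 ∧
      ℓ d ∈ AddSubgroup.closure {u : ⋀[ℚ]^2 H | ∃ g h : π, u = wedge (φ g) (φ h)} from key.2
  rw [commutator_eq_closure] at hd
  induction hd using Subgroup.closure_induction with
  | mem x hx =>
    obtain ⟨g, h, rfl⟩ := hx
    exact ⟨map_commutatorElement_eq_zero φ hφ g h,
      AddSubgroup.subset_closure ⟨g, h, ell_commutatorElement φ hφ ℓ hℓ g h⟩⟩
  | one => exact ⟨h1, hℓ.1 ▸ zero_mem _⟩
  | mul x y _ _ hx hy =>
    refine ⟨by rw [hφ, hx.1, hy.1, add_zero], ?_⟩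
    rw [hℓ.2, hx.1, wedge_zero_left, smul_zero, add_zero]
    exact add_mem hx.2 hy.2
  | inv x _ hx =>
    have e := hℓ.2 x x⁻¹
    rw [mul_inv_cancel, hℓ.1, hx.1, wedge_zero_left, smul_zero, add_zero] at e
    have f := hφ x x⁻¹
    rw [mul_inv_cancel, h1, hx.1, zero_add] at f
    refine ⟨f.symm, ?_⟩
    rw [eq_neg_of_add_eq_zero_right e.symm]
    exact neg_mem hx.2
end

section
/- Let ℓ : π → ∧²H be a half-intersection cocycle for φ, and let ⟨·,·⟩ be an alternating bilinear form on H with associated contraction action of ∧²H on H. Let a, b ∈ π satisfy ⟨φ(a),φ(b)⟩ = 0. Then for all c, d ∈ π: ℓ(c a c⁻¹)(φ(b)) + ℓ(d b d⁻¹)(φ(a)) = ℓ(a)(φ(b)) + ℓ(b)(φ(a)) + ⟨φ(b),φ(c)⟩·φ(a) + ⟨φ(a),φ(d)⟩·φ(b). -/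
/-!
The cocycle identity gives `ℓ(c a c⁻¹) = ℓ(a) + φ(c) ∧ φ(a)`: the terms `ℓ(c)` and `ℓ(c⁻¹)`
cancel, and the two half-wedges `φ(c) ∧ φ(a) / 2` and `(φ(c) + φ(a)) ∧ (-φ(c)) / 2` add up to
`φ(c) ∧ φ(a)`. Contracting with `φ(b)` produces `⟨φ(b), φ(c)⟩ φ(a) - ⟨φ(b), φ(a)⟩ φ(c)`, whose
second term vanishes by hypothesis; likewise with the roles of `a` and `b` exchanged. The
conjugation formula is `act_conj`, stated after contraction.
-/

open scoped TensorProduct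

/-- Conjugation formula `ℓ(c a c⁻¹) = ℓ(a) + φ(c) ∧ φ(a)`, after contraction with a vector `Z`. -/
theorem act_conj {π H : Type*} [Group π] [AddCommGroup H] [Module ℚ H]
    (φ : π → H) (hφ : ∀ g h : π, φ (g * h) = φ g + φ h)
    (ℓ : π → ⋀[ℚ]^2 H) (hℓ : IsHalfCocycle φ ℓ)
    (ω : H →ₗ[ℚ] H →ₗ[ℚ] ℚ)
    (act : ⋀[ℚ]^2 H →ₗ[ℚ] H →ₗ[ℚ] H)
    (hact : ∀ X Y Z : H, act (wedge X Y) Z = ω Z X • Y - ω Z Y • X)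
    (a c : π) (Z : H) :
    act (ℓ (c * a * c⁻¹)) Z = act (ℓ a) Z + (ω Z (φ c) • φ a - ω Z (φ a) • φ c) := by
  obtain ⟨h1, hmul⟩ := hℓ
  have hφ1 : φ 1 = 0 := by simpa using hφ 1 1
  have hinv : φ c⁻¹ = -φ c := by
    have h := hφ c c⁻¹
    rw [mul_inv_cancel, hφ1] at h
    exact (neg_eq_of_add_eq_zero_right h.symm).symm
  -- Since `φ(c) ∧ φ(c⁻¹) = -φ(c) ∧ φ(c) = 0`, the cocycle is odd under inversion.
  have hodd : act (ℓ c⁻¹) Z = -act (ℓ c) Z := by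
    have h := congrArg (fun w => act w Z) (hmul c c⁻¹)
    simp only [mul_inv_cancel, h1, map_add, map_smul, map_zero, LinearMap.add_apply,
      LinearMap.smul_apply, LinearMap.zero_apply, hact, hinv, map_neg, smul_neg, neg_smul,
      sub_self, smul_zero, add_zero] at h
    exact (neg_eq_of_add_eq_zero_right h.symm).symm
  rw [hmul, hmul]
  simp only [map_add, map_smul, LinearMap.add_apply, LinearMap.smul_apply, hact, hφ, hinv,
    hodd, map_neg]
  module

theorem ell_conjugates_pairing {π H : Type*} [Group π] [AddCommGroup H] [Module ℚ H]
    (φ : π → H) (hφ : ∀ g h : π, φ (g * h) = φ g + φ h)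
    (ℓ : π → ⋀[ℚ]^2 H) (hℓ : IsHalfCocycle φ ℓ)
    (ω : H →ₗ[ℚ] H →ₗ[ℚ] ℚ) (halt : ∀ v : H, ω v v = 0)
    (act : ⋀[ℚ]^2 H →ₗ[ℚ] H →ₗ[ℚ] H)
    (hact : ∀ X Y Z : H, act (wedge X Y) Z = ω Z X • Y - ω Z Y • X)
    (a b : π) (hab : ω (φ a) (φ b) = 0) :
    ∀ c d : π,
      act (ℓ (c * a * c⁻¹)) (φ b) + act (ℓ (d * b * d⁻¹)) (φ a)
        = act (ℓ a) (φ b) + act (ℓ b) (φ a)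
          + ω (φ b) (φ c) • φ a + ω (φ a) (φ d) • φ b := by
  intro c d
  have hba : ω (φ b) (φ a) = 0 := by
    have h := halt (φ a + φ b)
    simpa [halt, hab] using h
  rw [act_conj φ hφ ℓ hℓ ω act hact a c, act_conj φ hφ ℓ hℓ ω act hact b d, hab, hba]
  module
end

section
/- Let F be the free group on generators x₁, y₁, x₂, y₂, let H be the 4-dimensional ℚ-vector space with basis X₁,Y₁,X₂,Y₂ equipped with the alternating bilinear form ⟨·,·⟩ with ⟨Xᵢ,Yⱼ⟩ = δᵢⱼ and ⟨Xᵢ,Xⱼ⟩ = ⟨Yᵢ,Yⱼ⟩ = 0, let φ : F → H be the homomorphism with φ(xᵢ) = Xᵢ and φ(yᵢ) = Yᵢ, and let ℓ : F → ∧²H be a half-intersection cocycle for φ with ℓ(xᵢ) = (1/2)·Xᵢ∧Yᵢ and ℓ(yᵢ) = −(1/2)·Xᵢ∧Yᵢ for i = 1, 2. Then for a = x₁x₂y₂x₂⁻¹ and b = y₂x₁⁻¹ one has ⟨φ(a),φ(b)⟩ = 0, ℓ(a)(φ(b)) + ℓ(b)(φ(a)) = X₁, and there are no integers m, n with X₁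 = m·φ(a) + n·φ(b). -/
/-!
The images are `φ a = X₁ + Y₂` and `φ b = Y₂ - X₁`. Since `v ∧ v = 0`, a half-intersection cocycle
satisfies `ℓ g⁻¹ = -ℓ g` (`IsHalfCocycle.map_inv`), so the cocycle rule gives
`ℓ a = (X₁∧Y₁ + X₂∧Y₂ + X₁∧Y₂)/2` and `ℓ b = (-X₁∧Y₁ - X₂∧Y₂ + X₁∧Y₂)/2`. Contracting,
`ℓ a (φ b) = (X₁ - Y₂)/2` and `ℓ b (φ a) = (X₁ + Y₂)/2`, whose sum is `X₁`. Finally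
`X₁ = m • φ a + n • φ b` forces `m - n = 1` and `m + n = 0`, which has no integer solution.
-/

open scoped TensorProduct

/-- The standard basis vector `Xᵢ`/`Yᵢ` of the homology of the genus-2 surface:
`e 0 = X₁`, `e 1 = Y₁`, `e 2 = X₂`, `e 3 = Y₂`. -/
def e (i : Fin 4) : Fin 4 → ℚ := Pi.single i 1

theorem wedge_neg_self {H : Type*} [AddCommGroup H] [Module ℚ H] (x : H) :
    wedge x (-x) = 0 := by
  apply Subtype.ext
  simp [wedge]

theorem IsHalfCocycle.map_inv {π H : Type*} [Group π] [AddCommGroup H] [Module ℚ H]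
    {φ : π → H} {ℓ : π → ⋀[ℚ]^2 H} (hℓ : IsHalfCocycle φ ℓ)
    (hφ : ∀ g : π, φ g⁻¹ = -φ g) (g : π) : ℓ g⁻¹ = -ℓ g := by
  have h := hℓ.2 g g⁻¹
  rw [mul_inv_cancel, hℓ.1, hφ, wedge_neg_self, smul_zero, add_zero] at h
  exact (neg_eq_of_add_eq_zero_right h.symm).symm

theorem example_detects_intersection
    (ω : (Fin 4 → ℚ) →ₗ[ℚ] (Fin 4 → ℚ) →ₗ[ℚ] ℚ)
    (hω : ∀ u v : Fin 4 → ℚ, ω u v = u 0 * v 1 - u 1 * v 0 + u 2 * v 3 - u 3 * v 2)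
    (act : ⋀[ℚ]^2 (Fin 4 → ℚ) →ₗ[ℚ] (Fin 4 → ℚ) →ₗ[ℚ] (Fin 4 → ℚ))
    (hact : ∀ X Y Z : Fin 4 → ℚ, act (wedge X Y) Z = ω Z X • Y - ω Z Y • X)
    (φ : FreeGroup (Fin 4) → (Fin 4 → ℚ))
    (hφ : ∀ g h : FreeGroup (Fin 4), φ (g * h) = φ g + φ h)
    (hφ₀ : ∀ i : Fin 4, φ (FreeGroup.of i) = e i)
    (ℓ : FreeGroup (Fin 4) → ⋀[ℚ]^2 (Fin 4 → ℚ))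
    (hℓ : IsHalfCocycle φ ℓ)
    (hx1 : ℓ (FreeGroup.of 0) = (1/2 : ℚ) • wedge (e 0) (e 1))
    (hy1 : ℓ (FreeGroup.of 1) = -((1/2 : ℚ) • wedge (e 0) (e 1)))
    (hx2 : ℓ (FreeGroup.of 2) = (1/2 : ℚ) • wedge (e 2) (e 3))
    (hy2 : ℓ (FreeGroup.of 3) = -((1/2 : ℚ) • wedge (e 2) (e 3)))
    (a b : FreeGroup (Fin 4))
    (ha : a = FreeGroup.of 0 * FreeGroup.of 2 * FreeGroup.of 3 * (FreeGroup.of 2)⁻¹)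
    (hb : b = FreeGroup.of 3 * (FreeGroup.of 0)⁻¹) :
    ω (φ a) (φ b) = 0 ∧
    act (ℓ a) (φ b) + act (ℓ b) (φ a) = e 0 ∧
    ¬ ∃ m n : ℤ, e 0 = m • φ a + n • φ b := by
  have hφ1 : φ 1 = 0 := by simpa using hφ 1 1
  have hinv : ∀ g, φ g⁻¹ = -φ g := fun g => by
    have h := hφ g g⁻¹
    rw [mul_inv_cancel, hφ1] at h
    exact (neg_eq_of_add_eq_zero_right h.symm).symm
  have hφa : φ a = e 0 + e 3 := by
    rw [ha, hφ, hφ, hφ, hinv, hφ₀, hφ₀, hφ₀]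
    abel
  have hφb : φ b = e 3 - e 0 := by
    rw [hb, hφ, hinv, hφ₀, hφ₀]
    abel
  refine ⟨?_, ?_, ?_⟩
  · rw [hφa, hφb, hω]
    simp [e]
  · rw [hφa, hφb, ha, hb]
    simp only [hℓ.2, hℓ.map_inv hinv, hφ, hinv, hφ₀, hx1, hx2, hy2, map_add, map_neg, map_smul,
      LinearMap.add_apply, LinearMap.neg_apply, LinearMap.smul_apply, hact, hω]
    ext i
    fin_cases i <;> simp [e] <;> norm_num
  · rintro ⟨m, n, h⟩
    rw [hφa, hφb] at h
    -- The `X₁`- and `Y₂`-coordinates of the equation.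
    have h0 := congrFun h 0
    have h3 := congrFun h 3
    simp [e] at h0 h3
    norm_cast at h0 h3
    omega
end
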